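/- Let n, m ≥ 2 be integers with n ≠ m, and define G* : (0,1) → (0,1) by G*(x) = t/(1+t) with t = (x/(1−x))^{(n−1)/(m−1)}. Then ∫₀¹ ((1−x)^{n−1} G*(x)^m + x^{n−1} (1−G*(x))^m) dx < ∫₀¹ ((1−x)^{n−1} x^m + x^{n−1} (1−x)^m) dx. -/

import Mathlib

open MeasureTheory

/-!
For fixed `x ∈ (0,1)` the function `g ↦ (1-x)^(n-1) g^m + x^(n-1) (1-g)^m` is strictly convex on
`[0,1]`, and its critical point is the `g` with `(g/(1-g))^(m-1) = (x/(1-x))^(n-1)`, that is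
`g = G*(x)`. Hence the integrand for `G*` is at most the integrand for `G(x) = x`
(`integrand_lt`, by adding two strict tangent-line inequalities `tangent_lt_pow`), strictly so when
`G*(x) ≠ x`. As `n ≠ m`, the exponent `(n-1)/(m-1)` is not `1`, so `G*(x) = x` forces
`x/(1-x) = 1`, and the inequality is strict for every `x ∈ (0,1)` except `1/2`. The same bound gives
the integrability of the left integrand, and integration yields the claim.
-/

/-- The graph of `y ↦ y ^ m` lies strictly above its tangent line at `g`, away from `g`. -/
lemma tangent_lt_pow {m : ℕ} (hm : 2 ≤ m) {g y : ℝ} (hg : 0 < g) (hy : 0 < y) (hne : y ≠ g) :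
    g ^ m + m * g ^ (m - 1) * (y - g) < y ^ m := by
  have hs : -1 ≤ y / g - 1 := by
    have : 0 < y / g := by positivity
    linarith
  have hs' : y / g - 1 ≠ 0 := by
    intro h
    apply hne
    field_simp at h
    linarith
  have hp : (1 : ℝ) < m := by exact_mod_cast hm
  have h := one_add_mul_self_lt_rpow_one_add hs hs' hp
  rw [Real.rpow_natCast, add_sub_cancel, div_pow, lt_div_iff₀ (by positivity)] at h
  refine lt_of_eq_of_lt ?_ h
  obtain ⟨k, rfl⟩ : ∃ k, m = k + 1 := ⟨m - 1, by omega⟩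
  simp only [Nat.add_sub_cancel]
  field_simp
  ring

/-- A critical point `g` of `g ↦ a g^m + b (1-g)^m` in `(0,1)` is its unique minimizer there. -/
lemma integrand_lt {m : ℕ} (hm : 2 ≤ m) {a b g x : ℝ} (ha : 0 < a) (hb : 0 < b)
    (hg : 0 < g) (hg1 : g < 1) (hx : 0 < x) (hx1 : x < 1) (hne : x ≠ g)
    (hcrit : a * g ^ (m - 1) = b * (1 - g) ^ (m - 1)) :
    a * g ^ m + b * (1 - g) ^ m < a * x ^ m + b * (1 - x) ^ m := by
  have h1 := mul_lt_mul_of_pos_left (tangent_lt_pow hm hg hx hne) ha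
  have h2 := mul_lt_mul_of_pos_left (tangent_lt_pow hm (g := 1 - g) (y := 1 - x)
    (by linarith) (by linarith) (fun h => hne (by linarith))) hb
  -- the first-order terms cancel because `g` is critical
  have h3 : a * (m * g ^ (m - 1) * (x - g)) + b * (m * (1 - g) ^ (m - 1) * (1 - x - (1 - g)))
      = 0 := by
    linear_combination (m * (x - g)) * hcrit
  linarith

/-- For `n ≠ m` (both `≥ 2`), with `G*(x) = t/(1+t)`, `t = (x/(1−x))^{(n−1)/(m−1)}`,
the probability integral for the alternative `G*` is strictly smaller than under the null. -/
theorem ks_biased_smallest_level_integral (n m : ℕ) (hn : 2 ≤ n) (hm : 2 ≤ m) (hnm : n ≠ m) :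
    let Gs : ℝ → ℝ := fun x =>
      (x / (1 - x)) ^ (((n : ℝ) - 1) / ((m : ℝ) - 1)) /
        (1 + (x / (1 - x)) ^ (((n : ℝ) - 1) / ((m : ℝ) - 1)))
    (∫ x in (0:ℝ)..1, ((1 - x) ^ (n - 1) * (Gs x) ^ m + x ^ (n - 1) * (1 - Gs x) ^ m)) <
    ∫ x in (0:ℝ)..1, ((1 - x) ^ (n - 1) * x ^ m + x ^ (n - 1) * (1 - x) ^ m) := by
  intro Gs
  have hn0 : (0 : ℝ) < (n : ℝ) - 1 := by
    have : (2 : ℝ) ≤ n := by exact_mod_cast hn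
    linarith
  have hm0 : (0 : ℝ) < (m : ℝ) - 1 := by
    have : (2 : ℝ) ≤ m := by exact_mod_cast hm
    linarith
  have hr1 : ((n : ℝ) - 1) / ((m : ℝ) - 1) ≠ 1 := by
    intro h
    rw [div_eq_one_iff_eq hm0.ne'] at h
    exact hnm (by exact_mod_cast sub_left_injective h)
  have hGs : ∀ x : ℝ, 0 < x → x < 1 → 0 < Gs x ∧ Gs x < 1 ∧ (x ≠ 1 / 2 → x ≠ Gs x) ∧
      (1 - x) ^ (n - 1) * Gs x ^ (m - 1) = x ^ (n - 1) * (1 - Gs x) ^ (m - 1) := by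
    intro x hx hx1
    have hx1' : 0 < 1 - x := by linarith
    have hu : 0 < x / (1 - x) := by positivity
    set t : ℝ := (x / (1 - x)) ^ (((n : ℝ) - 1) / ((m : ℝ) - 1)) with ht
    have htpos : 0 < t := Real.rpow_pos_of_pos hu _
    have hG : Gs x = t / (1 + t) := rfl
    have hG' : 1 - Gs x = 1 / (1 + t) := by
      rw [hG]
      field_simp
      ring
    have htpow : t ^ (m - 1) = (x / (1 - x)) ^ (n - 1) := by
      rw [ht, ← Real.rpow_natCast, ← Real.rpow_mul hu.le, ← Real.rpow_natCast,
        Nat.cast_sub (by omega), Nat.cast_sub (by omega), Nat.cast_one,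
        div_mul_cancel₀ _ hm0.ne']
    refine ⟨by rw [hG]; positivity, ?_, ?_, ?_⟩
    · have : 0 < 1 - Gs x := by rw [hG']; positivity
      linarith
    · intro hxh hxG
      have htu : t = x / (1 - x) := by
        rw [hG, eq_div_iff (by positivity)] at hxG
        rw [eq_div_iff hx1'.ne']
        linarith
      have hu1 : x / (1 - x) ≠ 1 := by
        intro h
        rw [div_eq_one_iff_eq hx1'.ne'] at h
        exact hxh (by linarith)
      apply hr1
      rw [← Real.rpow_right_inj hu hu1, Real.rpow_one, ← ht, htu]
    · rw [hG', hG, div_pow, div_pow, htpow, div_pow, one_pow]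
      field_simp
  have hlt : ∀ x : ℝ, 0 < x → x < 1 → x ≠ 1 / 2 →
      (1 - x) ^ (n - 1) * (Gs x) ^ m + x ^ (n - 1) * (1 - Gs x) ^ m <
        (1 - x) ^ (n - 1) * x ^ m + x ^ (n - 1) * (1 - x) ^ m := by
    intro x hx hx1 hxh
    obtain ⟨h0, h1, hne, hc⟩ := hGs x hx hx1
    exact integrand_lt hm (pow_pos (by linarith) _) (pow_pos hx _) h0 h1 hx hx1 (hne hxh) hc
  -- the endpoint `1`, where `x / (1 - x)` has a junk value, and `1 / 2` form a null set
  have hae : ∀ᵐ x ∂(volume.restrict (Set.Ioc (0 : ℝ) 1)), 0 < x ∧ x < 1 ∧ x ≠ 1 / 2 := by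
    filter_upwards [ae_restrict_mem measurableSet_Ioc,
      ae_restrict_of_ae (Measure.ae_ne volume (1 : ℝ)),
      ae_restrict_of_ae (Measure.ae_ne volume (1 / 2 : ℝ))] with x hx h1 h2
    exact ⟨hx.1, lt_of_le_of_ne hx.2 h1, h2⟩
  have hR : IntervalIntegrable
      (fun x : ℝ => (1 - x) ^ (n - 1) * x ^ m + x ^ (n - 1) * (1 - x) ^ m) volume 0 1 :=
    Continuous.intervalIntegrable (by fun_prop) _ _
  have hL : IntervalIntegrable
      (fun x : ℝ => (1 - x) ^ (n - 1) * (Gs x) ^ m + x ^ (n - 1) * (1 - Gs x) ^ m)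
      volume 0 1 := by
    rw [intervalIntegrable_iff_integrableOn_Ioc_of_le zero_le_one] at hR ⊢
    refine Integrable.mono' hR ?_ ?_
    · have hmeas : Measurable Gs := by
        have ht : Measurable fun x : ℝ =>
            (x / (1 - x)) ^ (((n : ℝ) - 1) / ((m : ℝ) - 1)) := by fun_prop
        exact ht.div (measurable_const.add ht)
      exact Measurable.aestronglyMeasurable (by fun_prop)
    · filter_upwards [hae] with x hx
      obtain ⟨h0, h1, -, -⟩ := hGs x hx.1 hx.2.1
      have hx1 : 0 < 1 - x := by linarith [hx.2.1]
      have hg1 : 0 < 1 - Gs x := by linarith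
      have hx0 := hx.1
      rw [Real.norm_of_nonneg (by positivity)]
      exact (hlt x hx.1 hx.2.1 hx.2.2).le
  refine intervalIntegral.integral_lt_integral_of_ae_le_of_measure_setOfPred_lt_ne_zero zero_le_one
    hL hR ?_ ?_
  · filter_upwards [hae] with x hx
    exact (hlt x hx.1 hx.2.1 hx.2.2).le
  · intro h0
    -- the strict inequality holds a.e., so `(0,1]` would be null if the set where it holds were
    have hbot : ∀ᵐ x ∂(volume.restrict (Set.Ioc (0 : ℝ) 1)), False := by
      filter_upwards [hae, measure_eq_zero_iff_ae_notMem.mp h0] with x hx hx'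
      exact hx' (hlt x hx.1 hx.2.1 hx.2.2)
    rw [Filter.eventually_false_iff_eq_bot, ae_eq_bot, Measure.restrict_eq_zero] at hbot
    simp at hbot
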